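/- Let 1 < p < 2 and define γ(t) = exp(p t^{p−1}) · ∫_t^∞ exp(−p s^{p−1}) ds for t ≥ 0. Then for every t ≥ 0 one has (p(p−1) t^{p−1} + p − 2) · γ(t) ≤ t. -/

import Mathlib

open Real MeasureTheory Set

/-- The function `γ(t) = exp(p t^{p−1}) ∫_t^∞ exp(−p s^{p−1}) ds`. -/
noncomputable def gam (p : ℝ) (t : ℝ) : ℝ :=
  Real.exp (p * t ^ (p - 1)) * ∫ s in Ioi t, Real.exp (-p * s ^ (p - 1))

/-!
Write `A(s) = p(p−1)s^{p−1} + p − 2`, an increasing function of `s ≥ 0`. If `A(t) ≤ 0` the claim is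
immediate, since `γ ≥ 0`. Otherwise put `H(s) = s exp(−p s^{p−1}) / A(s)`, a nonnegative function
on `[t, ∞)`. With `u = p(p−1)s^{p−1}`,
`−H'(s) exp(p s^{p−1}) = ((u−1)A + (p−1)u) / A² = 1 + (p−1)(2−p)/A² ≥ 1`,
so `∫_t^T exp(−p s^{p−1}) ds ≤ H(t) − H(T) ≤ H(t)` for every `T ≥ t`; `T → ∞` bounds the tail
integral by `H(t)`, which is the claim. The derivative of `−H` is `hasDerivAt_tail_majorant`.
-/

/-- The function `−s exp(−p s^{p−1}) / A(s)`, with `A(s) = p(p−1)s^{p−1} + p − 2`, has derivative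
`exp(−p s^{p−1}) (1 + (p−1)(2−p)/A(s)²)`. -/
lemma hasDerivAt_tail_majorant (p s : ℝ) (hs : 0 < s)
    (hA : 0 < p * (p - 1) * s ^ (p - 1) + p - 2) :
    HasDerivAt
      (fun x : ℝ => -(x * Real.exp (-p * x ^ (p - 1)) / (p * (p - 1) * x ^ (p - 1) + p - 2)))
      (Real.exp (-p * s ^ (p - 1)) *
        (1 + (p - 1) * (2 - p) / (p * (p - 1) * s ^ (p - 1) + p - 2) ^ 2)) s := by
  have hpow : HasDerivAt (fun x : ℝ => x ^ (p - 1)) ((p - 1) * s ^ (p - 1) / s) s := by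
    have h := Real.hasDerivAt_rpow_const (x := s) (p := p - 1) (Or.inl hs.ne')
    rwa [Real.rpow_sub_one hs.ne', ← mul_div_assoc] at h
  have hexp := (hpow.const_mul (-p)).exp
  have hden := ((hpow.const_mul (p * (p - 1))).add_const p).sub_const 2
  refine (((hasDerivAt_id s).mul hexp).div hden hA.ne').neg.congr_deriv ?_
  simp only [id, Pi.mul_apply]
  generalize Real.exp (-p * s ^ (p - 1)) = E
  generalize s ^ (p - 1) = v at hA ⊢
  generalize hD : p * (p - 1) * v + p - 2 = D at hA ⊢
  have := hA.ne'
  field_simp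
  rw [← hD]
  ring

/-- For `1 < p < 2`, `(p(p−1) t^{p−1} + p − 2) γ(t) ≤ t` for all `t ≥ 0`. -/
theorem stmt_8 (p : ℝ) (hp1 : 1 < p) (hp2 : p < 2) :
    ∀ t : ℝ, 0 ≤ t → (p * (p - 1) * t ^ (p - 1) + p - 2) * gam p t ≤ t := by
  intro t ht
  have hint0 : 0 ≤ ∫ s in Ioi t, Real.exp (-p * s ^ (p - 1)) :=
    integral_nonneg fun s => (Real.exp_pos _).le
  have hgam : 0 ≤ gam p t := mul_nonneg (Real.exp_pos _).le hint0
  rcases le_or_gt (p * (p - 1) * t ^ (p - 1) + p - 2) 0 with hA | hA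
  · exact (mul_nonpos_of_nonpos_of_nonneg hA hgam).trans ht
  have htpos : 0 < t := by
    refine ht.lt_of_ne fun h => ?_
    rw [← h, Real.zero_rpow (by linarith)] at hA
    linarith
  have hAs : ∀ s, t ≤ s → 0 < p * (p - 1) * s ^ (p - 1) + p - 2 := by
    intro s hs
    have h1 : t ^ (p - 1) ≤ s ^ (p - 1) := Real.rpow_le_rpow ht hs (by linarith)
    have h2 : 0 ≤ p * (p - 1) := mul_nonneg (by linarith) (by linarith)
    nlinarith [mul_le_mul_of_nonneg_left h1 h2]
  have hcont : Continuous fun s : ℝ => Real.exp (-p * s ^ (p - 1)) :=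
    Real.continuous_exp.comp
      (continuous_const.mul (Real.continuous_rpow_const (by linarith)))
  have hfin : ∀ T, t ≤ T → ∫ s in t..T, Real.exp (-p * s ^ (p - 1)) ≤
      t * Real.exp (-p * t ^ (p - 1)) / (p * (p - 1) * t ^ (p - 1) + p - 2) := by
    intro T hT
    have h := intervalIntegral.integral_le_sub_of_hasDeriv_right_of_le hT
      (fun s hs => (hasDerivAt_tail_majorant p s (htpos.trans_le hs.1)
        (hAs s hs.1)).continuousAt.continuousWithinAt)
      (fun s hs => (hasDerivAt_tail_majorant p s (htpos.trans hs.1)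
        (hAs s hs.1.le)).hasDerivWithinAt)
      (φ := fun s => Real.exp (-p * s ^ (p - 1)))
      hcont.continuousOn.integrableOn_Icc
      (fun s hs => le_mul_of_one_le_right (Real.exp_pos _).le
        (le_add_of_nonneg_right
          (div_nonneg (mul_nonneg (by linarith) (by linarith)) (sq_nonneg _))))
    have hT0 : 0 ≤ T * Real.exp (-p * T ^ (p - 1)) / (p * (p - 1) * T ^ (p - 1) + p - 2) :=
      div_nonneg (mul_nonneg (ht.trans hT) (Real.exp_pos _).le) (hAs T hT).le
    linarith
  have htail : ∫ s in Ioi t, Real.exp (-p * s ^ (p - 1)) ≤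
      t * Real.exp (-p * t ^ (p - 1)) / (p * (p - 1) * t ^ (p - 1) + p - 2) := by
    by_cases hi : IntegrableOn (fun s : ℝ => Real.exp (-p * s ^ (p - 1))) (Ioi t)
    · exact le_of_tendsto (intervalIntegral_tendsto_integral_Ioi t hi Filter.tendsto_id)
        ((Filter.eventually_ge_atTop t).mono hfin)
    -- The integral does converge, but the junk value `0` makes a proof of that unnecessary.
    · rw [integral_undef hi]
      exact div_nonneg (mul_nonneg ht (Real.exp_pos _).le) hA.le
  rw [le_div_iff₀ hA] at htail
  calc (p * (p - 1) * t ^ (p - 1) + p - 2) * gam p t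
      = Real.exp (p * t ^ (p - 1)) * ((∫ s in Ioi t, Real.exp (-p * s ^ (p - 1))) *
          (p * (p - 1) * t ^ (p - 1) + p - 2)) := by
        rw [gam]; ring
    _ ≤ Real.exp (p * t ^ (p - 1)) * (t * Real.exp (-p * t ^ (p - 1))) :=
        mul_le_mul_of_nonneg_left htail (Real.exp_pos _).le
    _ = t := by
        rw [mul_left_comm, ← Real.exp_add, neg_mul, add_neg_cancel, Real.exp_zero, mul_one]
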